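/- Let U⁸ := ⟨(1,2,3,2,0,0,0),(0,0,0,2,1,2,3)⟩_ℝ ⊆ (ℝ/ℤ)⁷. Then U⁸ is a 2-dimensional proper subtorus with D(U⁸) = 3/10, and the relative spectrum 𝒮₁(U⁸) is a finite set. -/

import Mathlib

/-!
Since `dist (1/2) σ = 1/2 - ‖σ‖` on `ℝ/ℤ`, the bound `D ≤ r` asks for a point all of whose
coordinates have norm at least `1/2 - r`. The points of `U⁸` are
`(σ, 2σ, 3σ, 2σ + 2τ, τ, 2τ, 3τ)` with `σ, τ ∈ ℝ/ℤ`. If `‖σ‖, ‖2σ‖, ‖3σ‖ > 1/5`, then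
`1/5 < ‖σ‖ < 4/15`; when the same holds for `τ`, the norm of `2σ + 2τ` is less than `1/5`.
Hence `D(U⁸) ≥ 3/10`. Equality holds on the whole segment `σ = 2/5`, `τ ∈ [1/5, 4/15]`, and on
its mirror image.

A 1-dimensional subtorus of `U⁸` is a line `θ ↦ (σ, τ) = (pθ, qθ)` with `p, q` coprime integers.
It meets the circle `σ = 2/5` in `|p|` equidistant points, hence meets the segment as soon as
`|p| ≥ 15`; symmetrically for `|q| ≥ 15`. Only finitely many lines escape the value `3/10`.
-/

noncomputable section

abbrev Torus (n : ℕ) : Type := Fin n → AddCircle (1 : ℝ)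

def torusProj {n : ℕ} (x : Fin n → ℝ) : Torus n := fun i => (x i : AddCircle (1 : ℝ))

def spanTorus {n k : ℕ} (v : Fin k → Fin n → ℤ) : Set (Torus n) :=
  {p | ∃ t : Fin k → ℝ, p = torusProj fun i => ∑ j, t j * (v j i : ℝ)}

def IsSubtorus {n : ℕ} (k : ℕ) (S : Set (Torus n)) : Prop :=
  ∃ v : Fin k → Fin n → ℤ,
    LinearIndependent ℝ (fun j : Fin k => fun i : Fin n => (v j i : ℝ)) ∧ S = spanTorus v

def IsProperSub {n : ℕ} (S : Set (Torus n)) : Prop :=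
  ¬ S ⊆ ⋃ i : Fin n, {x : Torus n | x i = 0}

def DVal {n : ℕ} (S : Set (Torus n)) : ℝ :=
  sInf ((fun x : Torus n => ⨆ i, dist (x i) ((1 / 2 : ℝ) : AddCircle (1 : ℝ))) '' S)

def relSpec1 {n : ℕ} (U : Set (Torus n)) : Set ℝ :=
  {d | ∃ T : Set (Torus n), IsSubtorus 1 T ∧ IsProperSub T ∧ T ⊆ U ∧ d = DVal T}

def Spec (k n : ℕ) : Set ℝ :=
  {d | ∃ T : Set (Torus n), IsSubtorus k T ∧ IsProperSub T ∧ d = DVal T}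

def progSet (d : ℝ) (α β : ℚ) : Set ℝ :=
  {x | ∃ s : ℕ, x = d + 1 / ((α : ℝ) * s + (β : ℝ))}

def U8 : Set (Torus 7) := spanTorus ![![1, 2, 3, 2, 0, 0, 0], ![0, 0, 0, 2, 1, 2, 3]]

section UnitAddCircle

theorem coe_add_intCast_unitAddCircle (x : ℝ) (n : ℤ) :
    ((x + n : ℝ) : UnitAddCircle) = x := by
  have hn : ((n : ℝ) : UnitAddCircle) = 0 := (AddCircle.coe_eq_zero_iff 1).2 ⟨n, by simp⟩
  rw [AddCircle.coe_add, hn, add_zero]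

theorem norm_coe_unitAddCircle_le (x : ℝ) (n : ℤ) : ‖(x : UnitAddCircle)‖ ≤ |x - n| :=
  UnitAddCircle.norm_eq.trans_le (round_le x n)

theorem le_norm_coe_unitAddCircle {x r : ℝ} (n : ℤ) (hx : x ∈ Set.Icc (n + r) (n + 1 - r)) :
    r ≤ ‖(x : UnitAddCircle)‖ := by
  rw [UnitAddCircle.norm_eq, le_abs]
  rcases le_or_gt (round x) n with h | h
  · have : (round x : ℝ) ≤ n := mod_cast h
    left; linarith [hx.1]
  · have : (n + 1 : ℝ) ≤ round x := mod_cast h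
    right; linarith [hx.2]

theorem norm_unitAddCircle_le_half (σ : UnitAddCircle) : ‖σ‖ ≤ 1 / 2 := by
  simpa using AddCircle.norm_le_half_period 1 one_ne_zero (x := σ)

theorem eq_coe_norm_or_eq_neg_coe_norm (σ : UnitAddCircle) :
    σ = (‖σ‖ : ℝ) ∨ σ = (-‖σ‖ : ℝ) := by
  obtain ⟨x, rfl⟩ := QuotientAddGroup.mk_surjective σ
  have hx : ((x - round x : ℝ) : UnitAddCircle) = x := by
    simpa only [Int.cast_neg, ← sub_eq_add_neg] using
      coe_add_intCast_unitAddCircle x (-round x)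
  change (x : UnitAddCircle) = (‖(x : UnitAddCircle)‖ : ℝ) ∨
    (x : UnitAddCircle) = (-‖(x : UnitAddCircle)‖ : ℝ)
  rw [UnitAddCircle.norm_eq]
  rcases abs_choice (x - round x) with h | h
  · left; rw [h, hx]
  · right; rw [h, neg_neg, hx]

theorem norm_nsmul_eq_norm_coe_mul_norm (k : ℕ) (σ : UnitAddCircle) :
    ‖k • σ‖ = ‖((k * ‖σ‖ : ℝ) : UnitAddCircle)‖ := by
  rw [← nsmul_eq_mul, AddCircle.coe_nsmul]
  rcases eq_coe_norm_or_eq_neg_coe_norm σ with h | h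
  · rw [← h]
  · rw [AddCircle.coe_neg, eq_neg_iff_add_eq_zero, ← neg_eq_iff_add_eq_zero] at h
    rw [← h, smul_neg, norm_neg]

theorem dist_coe_half_eq_half_sub_norm (σ : UnitAddCircle) :
    dist ((1 / 2 : ℝ) : UnitAddCircle) σ = 1 / 2 - ‖σ‖ := by
  have h_nonneg := norm_nonneg σ
  have h_half := norm_unitAddCircle_le_half σ
  have h_abs : |1 / 2 - ‖σ‖| = 1 / 2 - ‖σ‖ := abs_of_nonneg (by linarith)
  have h_norm : ‖((1 / 2 - ‖σ‖ : ℝ) : UnitAddCircle)‖ = 1 / 2 - ‖σ‖ := by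
    rw [(AddCircle.norm_coe_eq_abs_iff 1 one_ne_zero).2 (by rw [h_abs, abs_one]; linarith), h_abs]
  have h_neg : ((1 / 2 - -‖σ‖ : ℝ) : UnitAddCircle) = -((1 / 2 - ‖σ‖ : ℝ) : UnitAddCircle) := by
    rw [← AddCircle.coe_neg, ← coe_add_intCast_unitAddCircle (-(1 / 2 - ‖σ‖)) 1]
    congr 1
    push_cast
    ring
  rw [dist_eq_norm]
  rcases eq_coe_norm_or_eq_neg_coe_norm σ with h | h
  · rwa [AddCircle.coe_sub, ← h] at h_norm
  · rwa [← norm_neg, ← h_neg, AddCircle.coe_sub, ← h] at h_norm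

theorem exists_add_intCast_div_mem_Ico {p : ℤ} (hp : p ≠ 0) (b a : ℝ) :
    ∃ j : ℤ, b + j / p ∈ Set.Ico a (a + 1 / |(p : ℝ)|) := by
  have hpos : 0 < 1 / |(p : ℝ)| := by positivity
  have h := sub_toIcoDiv_zsmul_mem_Ico hpos a b
  rw [zsmul_eq_mul, mul_one_div] at h
  set k := toIcoDiv hpos a b
  rcases abs_choice (p : ℝ) with h_abs | h_abs <;> rw [h_abs] at h ⊢
  · exact ⟨-k, by rwa [Int.cast_neg, neg_div, ← sub_eq_add_neg]⟩
  · exact ⟨k, by simpa only [div_neg, sub_neg_eq_add] using h⟩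

theorem exists_zsmul_eq_and_zsmul_mem_Ico {p q : ℤ} (hpq : IsCoprime p q) (hp : p ≠ 0)
    (c a : ℝ) : ∃ θ : UnitAddCircle, p • θ = c ∧
      ∃ t ∈ Set.Ico a (a + 1 / |(p : ℝ)|), q • θ = t := by
  have hp' : (p : ℝ) ≠ 0 := mod_cast hp
  -- On the fibre `p • θ = c`, the values of `q • θ` are the classes of `c * q / p + j / p`.
  obtain ⟨j, hj⟩ := exists_add_intCast_div_mem_Ico hp (c * q / p) a
  obtain ⟨u, v, huv⟩ := hpq
  have huv' : (u : ℝ) * p + v * q = 1 := mod_cast huv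
  refine ⟨((c + j * v) / p : ℝ), ?_, c * q / p + j / p, hj, ?_⟩
  · rw [← AddCircle.coe_zsmul, ← coe_add_intCast_unitAddCircle c (j * v)]
    congr 1
    simp only [zsmul_eq_mul]
    push_cast
    field_simp
  · rw [← AddCircle.coe_zsmul, ← coe_add_intCast_unitAddCircle (c * q / p + j / p) (-(j * u))]
    congr 1
    simp only [zsmul_eq_mul]
    push_cast
    field_simp
    linear_combination (j : ℝ) * huv'

end UnitAddCircle

section Torus

variable {n : ℕ}

/-- The point `(1/2, …, 1/2)` of the torus, so that `DVal` becomes `Metric.infDist` from it for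
the sup metric on `Torus n`. -/
def halfPoint (n : ℕ) : Torus n := fun _ => ((1 / 2 : ℝ) : AddCircle (1 : ℝ))

theorem dist_halfPoint_le_iff {r : ℝ} (hr : 0 ≤ r) (x : Torus n) :
    dist (halfPoint n) x ≤ r ↔ ∀ i, 1 / 2 - r ≤ ‖x i‖ := by
  simp only [dist_pi_le_iff hr, halfPoint, dist_coe_half_eq_half_sub_norm, sub_le_comm]

theorem dist_halfPoint_lt_iff {r : ℝ} (hr : 0 < r) (x : Torus n) :
    dist (halfPoint n) x < r ↔ ∀ i, 1 / 2 - r < ‖x i‖ := by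
  simp only [dist_pi_lt_iff hr, halfPoint, dist_coe_half_eq_half_sub_norm, sub_lt_comm]

theorem iSup_dist_half_eq_dist_halfPoint (x : Torus n) :
    ⨆ i, dist (x i) ((1 / 2 : ℝ) : AddCircle (1 : ℝ)) = dist (halfPoint n) x := by
  rw [dist_comm]
  refine le_antisymm (Real.iSup_le (dist_le_pi_dist x (halfPoint n)) dist_nonneg) ?_
  refine (dist_pi_le_iff (Real.iSup_nonneg fun i => dist_nonneg)).2 fun i => ?_
  exact le_ciSup (f := fun i => dist (x i) (halfPoint n i)) (Set.finite_range _).bddAbove i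

theorem DVal_eq_infDist (S : Set (Torus n)) : DVal S = Metric.infDist (halfPoint n) S := by
  simp only [DVal, iSup_dist_half_eq_dist_halfPoint, Metric.infDist_eq_iInf, sInf_image']

theorem isProperSub_of_DVal_lt_half {S : Set (Torus n)} (hS : S.Nonempty)
    (hD : DVal S < 1 / 2) : IsProperSub S := by
  rw [DVal_eq_infDist, Metric.infDist_lt_iff hS] at hD
  obtain ⟨x, hxS, hx⟩ := hD
  intro hsub
  obtain ⟨i, hi⟩ := Set.mem_iUnion.1 (hsub hxS)
  have hpos : 1 / 2 - 1 / 2 < ‖x i‖ := (dist_halfPoint_lt_iff one_half_pos x).1 hx i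
  rw [show x i = 0 from hi, norm_zero] at hpos
  norm_num at hpos

theorem torusProj_eq_iff {x y : Fin n → ℝ} :
    torusProj x = torusProj y ↔ ∃ m : Fin n → ℤ, x - y = fun i => (m i : ℝ) := by
  have h (i : Fin n) : (x i : AddCircle (1 : ℝ)) = y i ↔ ∃ m : ℤ, x i - y i = m := by
    rw [← sub_eq_zero, ← AddCircle.coe_sub, AddCircle.coe_eq_zero_iff]
    simp [eq_comm]
  simp only [torusProj, funext_iff, h, Classical.skolem, Pi.sub_apply]

-- If `x ∈ P`, the vectors `r • x`, `r : ℝ`, lie in `Q + ℤⁿ`. As `ℝ` is uncountable, two of them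
-- have the same component in `ℤⁿ`, and their difference is a nonzero multiple of `x` lying in `Q`.
theorem le_of_image_torusProj_subset {P Q : Submodule ℝ (Fin n → ℝ)}
    (h : torusProj '' (P : Set (Fin n → ℝ)) ⊆ torusProj '' (Q : Set (Fin n → ℝ))) : P ≤ Q := by
  intro x hx
  have h_lift (r : ℝ) : ∃ m : Fin n → ℤ, r • x - (fun i => (m i : ℝ)) ∈ Q := by
    obtain ⟨y, hy, hxy⟩ := h ⟨r • x, P.smul_mem r hx, rfl⟩
    obtain ⟨m, hm⟩ := torusProj_eq_iff.1 hxy.symm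
    exact ⟨m, by rwa [← hm, sub_sub_cancel]⟩
  choose m hm using h_lift
  have h_not_inj : ¬ Function.Injective m := fun hinj => not_countable (α := ℝ) hinj.countable
  obtain ⟨r, s, hrs, hne⟩ : ∃ r s, m r = m s ∧ r ≠ s := by
    simpa [Function.Injective] using h_not_inj
  have hmem : (r - s) • x ∈ Q := by
    simpa [hrs, sub_smul] using Q.sub_mem (hm r) (hm s)
  exact (Q.smul_mem_iff (sub_ne_zero.2 hne)).1 hmem

theorem spanTorus_eq_image_span {k : ℕ} (v : Fin k → Fin n → ℤ) :
    spanTorus v = torusProj ''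
      (Submodule.span ℝ (Set.range fun j i => (v j i : ℝ)) : Set (Fin n → ℝ)) := by
  ext p
  have h_sum (t : Fin k → ℝ) :
      (fun i => ∑ j, t j * (v j i : ℝ)) = ∑ j, t j • fun i => (v j i : ℝ) := by
    ext i
    simp
  simp only [spanTorus, Set.mem_ofPred_eq, h_sum, Set.mem_image, SetLike.mem_coe,
    Submodule.mem_span_range_iff_exists_fun, exists_exists_eq_and, eq_comm (a := p)]

theorem mem_span_of_spanTorus_subset {k l : ℕ} {v : Fin k → Fin n → ℤ} {w : Fin l → Fin n → ℤ}
    (h : spanTorus w ⊆ spanTorus v) (j : Fin l) :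
    (fun i => (w j i : ℝ)) ∈ Submodule.span ℝ (Set.range fun j i => (v j i : ℝ)) := by
  rw [spanTorus_eq_image_span, spanTorus_eq_image_span] at h
  exact le_of_image_torusProj_subset h (Submodule.subset_span ⟨j, rfl⟩)

end Torus

section U8

/-- The two integer vectors spanning `U8`. -/
def u8Gen : Fin 2 → Fin 7 → ℤ := ![![1, 2, 3, 2, 0, 0, 0], ![0, 0, 0, 2, 1, 2, 3]]

/-- The point of `U8` with coordinates `σ`, `τ` on the two generating circles. -/
def u8Point (σ τ : UnitAddCircle) : Torus 7 :=
  ![σ, 2 • σ, 3 • σ, 2 • σ + 2 • τ, τ, 2 • τ, 3 • τ]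

theorem u8Point_coe (s t : ℝ) :
    u8Point s t = torusProj ![s, 2 * s, 3 * s, 2 * s + 2 * t, t, 2 * t, 3 * t] := by
  funext i
  fin_cases i <;> simp [u8Point, torusProj, ← AddCircle.coe_nsmul]

theorem torusProj_sum_u8Gen (c : Fin 2 → ℝ) :
    torusProj (fun i => ∑ j, c j * (u8Gen j i : ℝ)) = u8Point (c 0) (c 1) := by
  rw [u8Point_coe]
  congr 1
  funext i
  fin_cases i <;> simp [u8Gen, Fin.sum_univ_two, mul_comm]

theorem u8Point_mem_U8 (σ τ : UnitAddCircle) : u8Point σ τ ∈ U8 := by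
  obtain ⟨s, rfl⟩ := QuotientAddGroup.mk_surjective σ
  obtain ⟨t, rfl⟩ := QuotientAddGroup.mk_surjective τ
  exact ⟨![s, t], (torusProj_sum_u8Gen ![s, t]).symm⟩

theorem exists_eq_u8Point_of_mem_U8 {x : Torus 7} (hx : x ∈ U8) : ∃ σ τ, x = u8Point σ τ := by
  obtain ⟨c, rfl⟩ := hx
  exact ⟨c 0, c 1, torusProj_sum_u8Gen c⟩

theorem linearIndependent_u8Gen :
    LinearIndependent ℝ fun (j : Fin 2) (i : Fin 7) => (u8Gen j i : ℝ) := by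
  rw [Fintype.linearIndependent_iff]
  intro g hg
  have h0 : g 0 = 0 := by simpa [Fin.sum_univ_two, u8Gen] using congrFun hg 0
  have h1 : g 1 = 0 := by simpa [Fin.sum_univ_two, u8Gen] using congrFun hg 4
  exact Fin.forall_fin_two.2 ⟨h0, h1⟩

theorem isSubtorus_U8 : IsSubtorus 2 U8 := ⟨u8Gen, linearIndependent_u8Gen, rfl⟩

theorem dist_halfPoint_u8Point_comm (σ τ : UnitAddCircle) :
    dist (halfPoint 7) (u8Point σ τ) = dist (halfPoint 7) (u8Point τ σ) := by
  have h_swap (σ τ : UnitAddCircle) (i : Fin 7) :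
      u8Point τ σ i = u8Point σ τ (![4, 5, 6, 3, 0, 1, 2] i) := by
    fin_cases i <;> simp [u8Point, add_comm]
  have h_le (σ τ : UnitAddCircle) :
      dist (halfPoint 7) (u8Point τ σ) ≤ dist (halfPoint 7) (u8Point σ τ) :=
    (dist_pi_le_iff dist_nonneg).2 fun i => by
      rw [h_swap]
      exact dist_le_pi_dist (halfPoint 7) (u8Point σ τ) _
  exact le_antisymm (h_le τ σ) (h_le σ τ)

theorem norm_lt_four_fifteenths_of_lt_norm_nsmul {σ : UnitAddCircle} (h₂ : 1 / 5 < ‖2 • σ‖)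
    (h₃ : 1 / 5 < ‖3 • σ‖) : ‖σ‖ < 4 / 15 := by
  have h_bound (k : ℕ) : ‖k • σ‖ ≤ |k * ‖σ‖ - 1| := by
    rw [norm_nsmul_eq_norm_coe_mul_norm]
    simpa only [Int.cast_one] using norm_coe_unitAddCircle_le (k * ‖σ‖) 1
  have h_half := norm_unitAddCircle_le_half σ
  have h₂' := h₂.trans_le (h_bound 2)
  have h₃' := h₃.trans_le (h_bound 3)
  push_cast at h₂' h₃'
  have h_lt : ‖σ‖ < 2 / 5 := by
    rcases lt_abs.1 h₂' with h | h <;> linarith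
  rcases lt_abs.1 h₃' with h | h <;> linarith

theorem norm_two_nsmul_add_two_nsmul_lt {σ τ : UnitAddCircle}
    (hσ : ‖σ‖ ∈ Set.Ioo (1 / 5) (4 / 15)) (hτ : ‖τ‖ ∈ Set.Ioo (1 / 5) (4 / 15)) :
    ‖2 • σ + 2 • τ‖ < 1 / 5 := by
  obtain ⟨hσ₁, hσ₂⟩ := hσ
  obtain ⟨hτ₁, hτ₂⟩ := hτ
  have h_bound {a b : ℝ} (ha : σ = a) (hb : τ = b) (n : ℤ) (h : |2 * a + 2 * b - n| < 1 / 5) :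
      ‖2 • σ + 2 • τ‖ < 1 / 5 := by
    rw [ha, hb, ← AddCircle.coe_nsmul, ← AddCircle.coe_nsmul, ← AddCircle.coe_add, nsmul_eq_mul,
      nsmul_eq_mul]
    exact (norm_coe_unitAddCircle_le _ n).trans_lt h
  rcases eq_coe_norm_or_eq_neg_coe_norm σ with hs | hs <;>
    rcases eq_coe_norm_or_eq_neg_coe_norm τ with ht | ht
  · exact h_bound hs ht 1 (by rw [abs_lt]; push_cast; constructor <;> linarith)
  · exact h_bound hs ht 0 (by rw [abs_lt]; push_cast; constructor <;> linarith)
  · exact h_bound hs ht 0 (by rw [abs_lt]; push_cast; constructor <;> linarith)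
  · exact h_bound hs ht (-1) (by rw [abs_lt]; push_cast; constructor <;> linarith)

theorem three_tenths_le_dist_halfPoint_u8Point (σ τ : UnitAddCircle) :
    3 / 10 ≤ dist (halfPoint 7) (u8Point σ τ) := by
  by_contra! h
  rw [dist_halfPoint_lt_iff (by norm_num), show (1 / 2 - 3 / 10 : ℝ) = 1 / 5 by norm_num] at h
  have hσ := norm_lt_four_fifteenths_of_lt_norm_nsmul (h 1) (h 2)
  have hτ := norm_lt_four_fifteenths_of_lt_norm_nsmul (h 5) (h 6)
  exact (h 3).not_gt (norm_two_nsmul_add_two_nsmul_lt ⟨h 0, hσ⟩ ⟨h 4, hτ⟩)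

theorem dist_halfPoint_u8Point_two_fifths_le {t : ℝ} (ht : t ∈ Set.Icc (1 / 5) (4 / 15)) :
    dist (halfPoint 7) (u8Point (2 / 5 : ℝ) t) ≤ 3 / 10 := by
  obtain ⟨ht₁, ht₂⟩ := ht
  rw [dist_halfPoint_le_iff (by norm_num), u8Point_coe]
  -- The integer parts of `2/5, 4/5, 6/5, 4/5 + 2t, t, 2t, 3t`.
  refine fun i => le_norm_coe_unitAddCircle (![0, 0, 1, 1, 0, 0, 0] i) ?_
  fin_cases i <;> constructor <;> norm_num <;> linarith

theorem DVal_eq_three_tenths {T : Set (Torus 7)} (hT : T ⊆ U8)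
    (hmin : ∃ x ∈ T, dist (halfPoint 7) x ≤ 3 / 10) : DVal T = 3 / 10 := by
  obtain ⟨x, hxT, hx⟩ := hmin
  rw [DVal_eq_infDist]
  refine le_antisymm ((Metric.infDist_le_dist_of_mem hxT).trans hx) ?_
  refine (Metric.le_infDist ⟨x, hxT⟩).2 fun y hy => ?_
  obtain ⟨σ, τ, rfl⟩ := exists_eq_u8Point_of_mem_U8 (hT hy)
  exact three_tenths_le_dist_halfPoint_u8Point σ τ

theorem DVal_U8 : DVal U8 = 3 / 10 :=
  DVal_eq_three_tenths subset_rfl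
    ⟨_, u8Point_mem_U8 _ _, dist_halfPoint_u8Point_two_fifths_le (t := 1 / 5) (by norm_num)⟩

/-- The line of slope `(p, q)` in the coordinates of `u8Point`; it is reduced to a point when
`p = q = 0`. -/
def u8Line (p q : ℤ) : Set (Torus 7) := Set.range fun θ => u8Point (p • θ) (q • θ)

theorem u8Line_subset_U8 (p q : ℤ) : u8Line p q ⊆ U8 :=
  Set.range_subset_iff.2 fun _ => u8Point_mem_U8 _ _

theorem u8Line_mul_right {g : ℤ} (hg : g ≠ 0) (p q : ℤ) : u8Line (p * g) (q * g) = u8Line p q := by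
  simp only [u8Line, mul_smul]
  exact (DivisibleBy.surjective_smul UnitAddCircle ℤ hg).range_comp
    fun θ => u8Point (p • θ) (q • θ)

theorem exists_eq_u8Line {T : Set (Torus 7)} (hT : IsSubtorus 1 T) (hTU : T ⊆ U8) :
    ∃ p q, T = u8Line p q := by
  obtain ⟨w, -, rfl⟩ := hT
  obtain ⟨c, hc⟩ := (Submodule.mem_span_range_iff_exists_fun ℝ).1
    (mem_span_of_spanTorus_subset (v := u8Gen) hTU 0)
  have hc0 : c 0 = w 0 0 := by simpa [Fin.sum_univ_two, u8Gen] using congrFun hc 0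
  have hc1 : c 1 = w 0 4 := by simpa [Fin.sum_univ_two, u8Gen] using congrFun hc 4
  have h_point (x : ℝ) : torusProj (fun i => x * (w 0 i : ℝ)) =
      u8Point (w 0 0 • (x : UnitAddCircle)) (w 0 4 • (x : UnitAddCircle)) := by
    have hx : (fun i => x * (w 0 i : ℝ)) = fun i => ∑ j, (x * c j) * (u8Gen j i : ℝ) := by
      funext i
      simp [← congrFun hc i, mul_add, mul_assoc]
    rw [hx, torusProj_sum_u8Gen, hc0, hc1, ← AddCircle.coe_zsmul, ← AddCircle.coe_zsmul,
      zsmul_eq_mul, zsmul_eq_mul, mul_comm x, mul_comm x]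
  refine ⟨w 0 0, w 0 4, Set.Subset.antisymm ?_ ?_⟩
  · rintro _ ⟨t, rfl⟩
    exact ⟨(t 0 : UnitAddCircle), by simp only [Fin.sum_univ_one, h_point]⟩
  · rintro _ ⟨θ, rfl⟩
    obtain ⟨x, rfl⟩ := QuotientAddGroup.mk_surjective θ
    exact ⟨fun _ => x, by simpa only [Fin.sum_univ_one] using (h_point x).symm⟩

theorem exists_zsmul_eq_two_fifths {p q : ℤ} (hpq : IsCoprime p q) (hp : 15 ≤ |p|) :
    ∃ θ : UnitAddCircle, p • θ = (2 / 5 : ℝ) ∧ ∃ t ∈ Set.Icc (1 / 5 : ℝ) (4 / 15), q • θ = t := by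
  have hp0 : p ≠ 0 := by
    rintro rfl
    norm_num at hp
  have hp' : (15 : ℝ) ≤ |(p : ℝ)| := mod_cast hp
  have h_spacing : 1 / |(p : ℝ)| ≤ 1 / 15 := one_div_le_one_div_of_le (by norm_num) hp'
  obtain ⟨θ, hθ, t, ⟨ht₁, ht₂⟩, hqθ⟩ := exists_zsmul_eq_and_zsmul_mem_Ico hpq hp0 (2 / 5) (1 / 5)
  exact ⟨θ, hθ, t, ⟨ht₁, by linarith⟩, hqθ⟩

theorem DVal_u8Line {p q : ℤ} (hpq : IsCoprime p q) (h : 15 ≤ |p| ∨ 15 ≤ |q|) :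
    DVal (u8Line p q) = 3 / 10 := by
  refine DVal_eq_three_tenths (u8Line_subset_U8 p q) ?_
  rcases h with hp | hq
  · obtain ⟨θ, hpθ, t, ht, hqθ⟩ := exists_zsmul_eq_two_fifths hpq hp
    exact ⟨_, ⟨θ, rfl⟩, by simpa only [hpθ, hqθ] using dist_halfPoint_u8Point_two_fifths_le ht⟩
  · obtain ⟨θ, hqθ, t, ht, hpθ⟩ := exists_zsmul_eq_two_fifths hpq.symm hq
    refine ⟨_, ⟨θ, rfl⟩, ?_⟩
    rw [dist_halfPoint_u8Point_comm]
    simpa only [hpθ, hqθ] using dist_halfPoint_u8Point_two_fifths_le ht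

theorem finite_range_DVal_u8Line :
    (Set.range fun z : ℤ × ℤ => DVal (u8Line z.1 z.2)).Finite := by
  let box : Set (ℤ × ℤ) := Set.Ioo (-15) 15 ×ˢ Set.Ioo (-15) 15
  have h_box : box.Finite := (Set.finite_Ioo _ _).prod (Set.finite_Ioo _ _)
  refine ((h_box.image fun z => DVal (u8Line z.1 z.2)).insert (3 / 10)).subset ?_
  rintro _ ⟨⟨p, q⟩, rfl⟩
  rcases Nat.eq_zero_or_pos (Int.gcd p q) with h_gcd | h_gcd
  · obtain ⟨rfl, rfl⟩ := Int.gcd_eq_zero_iff.1 h_gcd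
    exact Or.inr ⟨(0, 0), by simp [box], rfl⟩
  obtain ⟨g, p', q', hg, hpq, rfl, rfl⟩ := Int.exists_gcd_one' h_gcd
  simp only [u8Line_mul_right (Int.natCast_ne_zero.2 hg.ne')]
  by_cases h : 15 ≤ |p'| ∨ 15 ≤ |q'|
  · exact Or.inl (DVal_u8Line (Int.isCoprime_iff_gcd_eq_one.2 hpq) h)
  · rw [not_or, not_le, not_le] at h
    exact Or.inr ⟨(p', q'), ⟨abs_lt.1 h.1, abs_lt.1 h.2⟩, rfl⟩

theorem relSpec1_U8_subset :
    relSpec1 U8 ⊆ Set.range fun z : ℤ × ℤ => DVal (u8Line z.1 z.2) := by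
  rintro _ ⟨T, hT, -, hTU, rfl⟩
  obtain ⟨p, q, rfl⟩ := exists_eq_u8Line hT hTU
  exact ⟨(p, q), rfl⟩

end U8

/-- `U⁸` is a 2-dimensional proper subtorus of `(ℝ/ℤ)⁷` with `D(U⁸) = 3/10`
and finite relative spectrum `𝒮₁(U⁸)`. -/
theorem stmt19 :
    IsSubtorus 2 U8 ∧ IsProperSub U8 ∧ DVal U8 = 3/10 ∧ (relSpec1 U8).Finite := by
  have h_proper : IsProperSub U8 :=
    isProperSub_of_DVal_lt_half ⟨_, u8Point_mem_U8 0 0⟩ (by rw [DVal_U8]; norm_num)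
  exact ⟨isSubtorus_U8, h_proper, DVal_U8, finite_range_DVal_u8Line.subset relSpec1_U8_subset⟩
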